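/- Let H = {rrb, rby} (the patterns: a triangle with two red edges and one blue edge, and a rainbow triangle with one edge of each color). Then h_2(n, H) = Θ(√n): for every positive integer n we have h_2(n, H) ≥ ⌈√n⌉, and there exist a constant C > 0 and an integer n0 such that h_2(n, H) ≤ C·√n for all n ≥ n0. -/

import Mathlib

/-- The three edge colors: red, blue, yellow. -/
inductive Col : Type
  | r | b | y
  deriving DecidableEq

/-- A (symmetric) 3-edge-coloring of the complete graph `K_n` on vertex set `Fin n`. -/
structure Coloring (n : ℕ) where
  col : Fin n → Fin n → Col
  symm : ∀ i j, col i j = col j i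

/-- The pattern (multiset of edge colors) of the triangle on vertices `u, v, w`. -/
def triPattern {n : ℕ} (c : Coloring n) (u v w : Fin n) : Multiset Col :=
  {c.col u v, c.col v w, c.col u w}

/-- The coloring `c` contains the pattern `P`: some triangle has color multiset `P`. -/
def Contains {n : ℕ} (c : Coloring n) (P : Multiset Col) : Prop :=
  ∃ u v w : Fin n, u ≠ v ∧ v ≠ w ∧ u ≠ w ∧ triPattern c u v w = P

/-- The coloring `c` avoids every pattern in the family `H`. -/
def Avoids {n : ℕ} (c : Coloring n) (H : Set (Multiset Col)) : Prop :=
  ∀ P ∈ H, ¬ Contains c P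

/-- A vertex set `S` is two-colored under `c`: the edges inside `S` use at most
two of the three colors, i.e. some color is missing on the edges inside `S`. -/
def TwoColored {n : ℕ} (c : Coloring n) (S : Finset (Fin n)) : Prop :=
  ∃ x : Col, ∀ i ∈ S, ∀ j ∈ S, i ≠ j → c.col i j ≠ x

/-- `h2 c` is the maximum size of a vertex set whose induced edges use at most
two of the three colors. -/
noncomputable def h2 {n : ℕ} (c : Coloring n) : ℕ :=
  sSup {k | ∃ S : Finset (Fin n), TwoColored c S ∧ S.card = k}

/-- `h2n n H = min { h2 c : c a 3-edge-coloring of K_n avoiding all patterns in H }`. -/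
noncomputable def h2n (n : ℕ) (H : Set (Multiset Col)) : ℕ :=
  sInf {m | ∃ c : Coloring n, Avoids c H ∧ h2 c = m}

/-- Pattern abbreviations. -/
def Prrr : Multiset Col := {Col.r, Col.r, Col.r}
def Pbbb : Multiset Col := {Col.b, Col.b, Col.b}
def Pyyy : Multiset Col := {Col.y, Col.y, Col.y}
def Prrb : Multiset Col := {Col.r, Col.r, Col.b}
def Prry : Multiset Col := {Col.r, Col.r, Col.y}
def Pbbr : Multiset Col := {Col.b, Col.b, Col.r}
def Pbby : Multiset Col := {Col.b, Col.b, Col.y}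
def Pyyr : Multiset Col := {Col.y, Col.y, Col.r}
def Pyyb : Multiset Col := {Col.y, Col.y, Col.b}
def Prby : Multiset Col := {Col.r, Col.b, Col.y}

theorem le_h2 {n : ℕ} (c : Coloring n) (S : Finset (Fin n)) (h : TwoColored c S) :
    S.card ≤ h2 c := by
  unfold h2
  apply le_csSup
  · refine ⟨n, ?_⟩
    rintro k ⟨T, -, rfl⟩
    simpa using Finset.card_le_univ T
  · exact ⟨S, h, rfl⟩

theorem h2_le {n : ℕ} (c : Coloring n) (m : ℕ)
    (h : ∀ S, TwoColored c S → S.card ≤ m) : h2 c ≤ m := by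
  unfold h2
  apply csSup_le
  · exact ⟨0, ∅, ⟨Col.r, by simp⟩, rfl⟩
  · rintro k ⟨S, hS, rfl⟩
    exact h S hS

/-- The triangle condition: red, blue forces blue. -/
def RB {n : ℕ} (c : Coloring n) : Prop :=
  ∀ u v w : Fin n, u ≠ v → v ≠ w → u ≠ w →
    c.col u v = Col.b → c.col v w = Col.r → c.col u w = Col.b

theorem rb_of_avoids {n : ℕ} (c : Coloring n) (h : Avoids c {Prrb, Prby}) : RB c := by
  intro u v w h1 h2 h3 hb hr
  rcases hx : c.col u w with _ | _ | _
  · exfalso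
    refine h Prrb (by simp) ⟨u, v, w, h1, h2, h3, ?_⟩
    simp only [triPattern, hb, hr, hx, Prrb]
    decide
  · rfl
  · exfalso
    refine h Prby (by simp) ⟨u, v, w, h1, h2, h3, ?_⟩
    simp only [triPattern, hb, hr, hx, Prby]
    decide

theorem avoids_of_rb {n : ℕ} (c : Coloring n) (h : RB c) : Avoids c {Prrb, Prby} := by
  have key : ∀ u v w : Fin n, u ≠ v → v ≠ w → u ≠ w →
    c.col u v = Col.b → c.col v w = Col.r → c.col u w = Col.b := h
  rintro P hP ⟨u, v, w, h1, h2, h3, ht⟩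
  have k1 := key u v w h1 h2 h3
  have k2 := key u w v h3 h2.symm h1
  have k3 := key v u w h1.symm h3 h2
  have k4 := key v w u h2 h3.symm h1.symm
  have k5 := key w u v h3.symm h1 h2.symm
  have k6 := key w v u h2.symm h1.symm h3.symm
  rw [c.symm v u] at *
  rw [c.symm w u] at *
  rw [c.symm w v] at *
  simp only [triPattern] at ht
  generalize c.col u v = a at *
  generalize c.col v w = b at *
  generalize c.col u w = d at *
  rcases hP with rfl | rfl
  · cases a <;> cases b <;> cases d <;>
      first
      | exact absurd ht (by decide)
      | exact absurd (k1 rfl rfl) (by decide)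
      | exact absurd (k2 rfl rfl) (by decide)
      | exact absurd (k3 rfl rfl) (by decide)
      | exact absurd (k4 rfl rfl) (by decide)
      | exact absurd (k5 rfl rfl) (by decide)
      | exact absurd (k6 rfl rfl) (by decide)
  · cases a <;> cases b <;> cases d <;>
      first
      | exact absurd ht (by decide)
      | exact absurd (k1 rfl rfl) (by decide)
      | exact absurd (k2 rfl rfl) (by decide)
      | exact absurd (k3 rfl rfl) (by decide)
      | exact absurd (k4 rfl rfl) (by decide)
      | exact absurd (k5 rfl rfl) (by decide)
      | exact absurd (k6 rfl rfl) (by decide)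

theorem lower {n : ℕ} (c : Coloring n) (h : RB c) : n ≤ h2 c * h2 c := by
  classical
  let R : Fin n → Fin n → Prop := fun x y => x ≠ y ∧ c.col x y = Col.r
  have hRs : ∀ x y, R x y → R y x := fun x y h => ⟨h.1.symm, by rw [c.symm]; exact h.2⟩
  have hblue : ∀ w v u, Relation.ReflTransGen R v u → w ≠ v → c.col w v = Col.b →
      w ≠ u ∧ c.col w u = Col.b := by
    intro w v u huv hwv hb
    induction huv with
    | refl => exact ⟨hwv, hb⟩
    | @tail a d _ hR ih =>
      obtain ⟨h1, h2⟩ := ih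
      have hne : w ≠ d := by
        rintro rfl
        have := hR.2
        rw [c.symm, h2] at this
        cases this
      exact ⟨hne, h w a d h1 hR.1 hne h2 hR.2⟩
  let s : Setoid (Fin n) :=
    ⟨Relation.ReflTransGen R, ⟨fun _ => .refl, fun {x y} hxy => by
      induction hxy with
      | refl => exact .refl
      | tail _ hR ih => exact Relation.ReflTransGen.head (hRs _ _ hR) ih,
      fun h1 h2 => h1.trans h2⟩⟩
  let f : Fin n → Fin n := fun x => (Quotient.mk s x).out
  have hf : ∀ x y, f x = f y ↔ Relation.ReflTransGen R x y := by
    intro x y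
    constructor
    · intro hxy
      have : Quotient.mk s x = Quotient.mk s y := by
        have := congrArg (Quotient.mk s) hxy
        simpa [f] using this
      exact Quotient.exact this
    · intro hxy
      have : Quotient.mk s x = Quotient.mk s y := Quotient.sound hxy
      simp only [f, this]
  have hff : ∀ x, f (f x) = f x := by
    intro x
    simp [f]
  have h1 : (Finset.univ.image f).card ≤ h2 c := by
    apply le_h2
    refine ⟨Col.r, ?_⟩
    intro i hi j hj hij hr
    simp only [Finset.mem_image, Finset.mem_univ, true_and] at hi hj
    obtain ⟨x, rfl⟩ := hi
    obtain ⟨y, rfl⟩ := hj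
    have := (hf (f x) (f y)).2 (.single ⟨hij, hr⟩)
    rw [hff, hff] at this
    exact hij this
  have h2' : ∀ a ∈ Finset.univ.image f, (Finset.univ.filter (fun x => f x = a)).card ≤ h2 c := by
    intro a _
    apply le_h2
    refine ⟨Col.b, ?_⟩
    intro i hi j hj hij hr
    simp only [Finset.mem_filter, Finset.mem_univ, true_and] at hi hj
    have := (hf j i).1 (hj.trans hi.symm)
    exact (hblue i j i this hij hr).1 rfl
  have := Finset.card_le_mul_card_image (f := f) Finset.univ (h2 c) h2'
  simp only [Finset.card_univ, Fintype.card_fin] at this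
  exact this.trans (Nat.mul_le_mul_left _ h1)

/-- Counting functions with prescribed values on a set. -/
theorem count_fun {E : Type*} [Fintype E] [DecidableEq E] (q : ℕ) (T : Finset E)
    (P : Finset (Fin q)) :
    (Finset.univ.filter (fun f : E → Fin q => ∀ e ∈ T, f e ∈ P)).card * q ^ T.card
      = P.card ^ T.card * q ^ (Fintype.card E) := by
  have h : (Finset.univ.filter (fun f : E → Fin q => ∀ e ∈ T, f e ∈ P))
      = Fintype.piFinset (fun e => if e ∈ T then P else Finset.univ) := by
    ext f
    simp only [Finset.mem_filter, Finset.mem_univ, true_and, Fintype.mem_piFinset]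
    refine forall_congr' fun e => ?_
    split_ifs with he <;> simp [he]
  rw [h, Fintype.card_piFinset]
  have h2 : ∀ e, (if e ∈ T then P else (Finset.univ : Finset (Fin q))).card
      = if e ∈ T then P.card else q := by
    intro e; split_ifs <;> simp
  simp only [h2]
  rw [Finset.prod_ite]
  simp only [Finset.prod_const]
  have e1 : (Finset.univ.filter (fun e => e ∈ T)) = T := by ext; simp
  have e2 : (Finset.univ.filter (fun e => e ∉ T)) = Tᶜ := by ext; simp
  rw [e1, e2, mul_assoc, ← pow_add, Finset.card_compl, Nat.sub_add_cancel (Finset.card_le_univ T)]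

theorem two_pred_pow (q : ℕ) (hq : 2 ≤ q) : 2 * (q - 1) ^ q ≤ q ^ q := by
  obtain ⟨k, rfl⟩ : ∃ k, q = k + 1 := ⟨q - 1, by omega⟩
  have hk : 1 ≤ k := by omega
  simp only [Nat.add_sub_cancel]
  have h : k ^ (k+1) + (k+1) * k ^ k ≤ (k + 1) ^ (k+1) := by
    rw [add_pow]
    have hsub : ({k, k + 1} : Finset ℕ) ⊆ Finset.range (k + 1 + 1) := by
      intro i hi
      simp only [Finset.mem_insert, Finset.mem_singleton] at hi
      rw [Finset.mem_range]
      omega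
    refine le_trans (le_of_eq ?_) (Finset.sum_le_sum_of_subset hsub)
    rw [Finset.sum_pair (by omega)]
    simp
    ring
  calc 2 * k ^ (k+1) = k ^ (k+1) + k * k ^ k := by ring
    _ ≤ k ^ (k+1) + (k+1) * k ^ k := by gcongr; omega
    _ ≤ _ := h

theorem ramsey_graph (q : ℕ) (hq : 2 ≤ q) :
    ∃ G : Fin (q ^ 4) → Fin (q ^ 4) → Prop, (∀ x y, G x y → G y x) ∧
      (∀ S : Finset (Fin (q ^ 4)), (∀ x ∈ S, ∀ y ∈ S, x ≠ y → G x y) → S.card ≤ 9) ∧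
      (∀ S : Finset (Fin (q ^ 4)), (∀ x ∈ S, ∀ y ∈ S, x ≠ y → ¬ G x y) →
        S.card ≤ 8 * q ^ 2) := by
  classical
  let V := Fin (q ^ 4)
  let E := Finset V
  let t := 8 * q ^ 2 + 1
  have hq0 : 0 < q := by omega
  let z : Fin q := ⟨0, hq0⟩
  let Q := q ^ (Fintype.card E)
  have hQ : 0 < Q := by positivity
  let bad (s : ℕ) (P : Finset (Fin q)) : Finset (E → Fin q) :=
    (Finset.powersetCard s (Finset.univ : Finset V)).biUnion
      (fun S => Finset.univ.filter (fun f : E → Fin q => ∀ e ∈ Finset.powersetCard 2 S, f e ∈ P))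
  have hbad : ∀ s P, (bad s P).card * q ^ (s.choose 2) ≤
      (q ^ 4) ^ s * (P.card ^ (s.choose 2) * Q) := by
    intro s P
    calc (bad s P).card * q ^ (s.choose 2)
        ≤ (∑ S ∈ Finset.powersetCard s (Finset.univ : Finset V),
            (Finset.univ.filter (fun f : E → Fin q =>
              ∀ e ∈ Finset.powersetCard 2 S, f e ∈ P)).card) * q ^ (s.choose 2) := by
          gcongr
          exact Finset.card_biUnion_le
      _ = ∑ S ∈ Finset.powersetCard s (Finset.univ : Finset V), P.card ^ (s.choose 2) * Q := by
          rw [Finset.sum_mul]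
          refine Finset.sum_congr rfl fun S hS => ?_
          have := count_fun q (Finset.powersetCard 2 S) P
          rw [Finset.card_powersetCard, (Finset.mem_powersetCard.1 hS).2] at this
          exact this
      _ = (q ^ 4).choose s * (P.card ^ (s.choose 2) * Q) := by
          rw [Finset.sum_const, Finset.card_powersetCard, smul_eq_mul]
          simp [V]
      _ ≤ _ := by
          gcongr
          exact Nat.choose_le_pow _ _
  have hA : 4 * (bad 10 {z}).card ≤ Q := by
    have h := hbad 10 {z}
    have h45 : Nat.choose 10 2 = 45 := by decide
    rw [h45] at h
    simp only [Finset.card_singleton, one_pow, one_mul] at h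
    have h4 : 4 * (q ^ 4) ^ 10 ≤ q ^ 45 := by
      calc 4 * (q ^ 4) ^ 10 ≤ q ^ 5 * (q ^ 4) ^ 10 := by
            gcongr
            calc 4 ≤ 2 ^ 5 := by norm_num
              _ ≤ q ^ 5 := by gcongr
        _ = _ := by ring
    have hp : 0 < q ^ 45 := by positivity
    refine Nat.le_of_mul_le_mul_right ?_ hp
    calc 4 * (bad 10 {z}).card * q ^ 45 = 4 * ((bad 10 {z}).card * q ^ 45) := by ring
      _ ≤ 4 * ((q ^ 4) ^ 10 * Q) := by gcongr
      _ = (4 * (q ^ 4) ^ 10) * Q := by ring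
      _ ≤ q ^ 45 * Q := by gcongr
      _ = _ := by ring
  have hB : 2 * (bad t {z}ᶜ).card ≤ Q := by
    have h := hbad t {z}ᶜ
    have hc : Nat.choose t 2 = q * (4 * q * t) := by
      rw [Nat.choose_two_right]
      have : t * (t - 1) = 2 * (q * (4 * q * t)) := by
        simp only [t, Nat.add_sub_cancel]; ring
      rw [this]; omega
    rw [hc, Finset.card_compl, Finset.card_singleton, Fintype.card_fin] at h
    have h2q : 2 * q ≤ 2 ^ q := by
      obtain ⟨k, rfl⟩ : ∃ k, q = k + 1 := ⟨q - 1, by omega⟩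
      have := Nat.lt_two_pow_self (n := k)
      rw [pow_succ]; omega
    have hpow : 2 * (q ^ 4) ^ t * (q - 1) ^ (q * (4 * q * t)) ≤ q ^ (q * (4 * q * t)) := by
      calc 2 * (q ^ 4) ^ t * (q - 1) ^ (q * (4 * q * t))
          ≤ 2 ^ (4 * t) * (q ^ 4) ^ t * (q - 1) ^ (q * (4 * q * t)) := by
            gcongr
            exact Nat.le_self_pow (by simp [t]) 2
        _ = (2 * q) ^ (4 * t) * (q - 1) ^ (q * (4 * q * t)) := by
            rw [mul_pow, ← pow_mul]
        _ ≤ (2 ^ q) ^ (4 * t) * (q - 1) ^ (q * (4 * q * t)) := by gcongr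
        _ = (2 * (q - 1) ^ q) ^ (4 * q * t) := by
            rw [mul_pow, ← pow_mul, ← pow_mul]
            congr 2; ring
        _ ≤ (q ^ q) ^ (4 * q * t) := by
            gcongr
            exact two_pred_pow q hq
        _ = _ := by rw [← pow_mul]
    have hp : 0 < q ^ (q * (4 * q * t)) := by positivity
    refine Nat.le_of_mul_le_mul_right ?_ hp
    generalize q * (4 * q * t) = M at *
    calc 2 * (bad t {z}ᶜ).card * q ^ M = 2 * ((bad t {z}ᶜ).card * q ^ M) := by ring
      _ ≤ 2 * ((q ^ 4) ^ t * ((q - 1) ^ M * Q)) := by gcongr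
      _ = (2 * (q ^ 4) ^ t * (q - 1) ^ M) * Q := by ring
      _ ≤ q ^ M * Q := by gcongr
      _ = _ := by ring
  have hex : ∃ f : E → Fin q, f ∉ bad 10 {z} ∪ bad t {z}ᶜ := by
    by_contra hcon
    push Not at hcon
    have h1 : (Finset.univ : Finset (E → Fin q)).card ≤ (bad 10 {z} ∪ bad t {z}ᶜ).card :=
      Finset.card_le_card fun f _ => hcon f
    have h2 := Finset.card_union_le (bad 10 {z}) (bad t {z}ᶜ)
    have h3 : (Finset.univ : Finset (E → Fin q)).card = Q := by
      rw [Finset.card_univ, Fintype.card_fun, Fintype.card_fin]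
    omega
  obtain ⟨f, hf⟩ := hex
  rw [Finset.mem_union, not_or] at hf
  obtain ⟨hf1, hf2⟩ := hf
  have hgen : ∀ s P, f ∉ bad (s + 1) P → ∀ S : Finset V,
      (∀ x ∈ S, ∀ y ∈ S, x ≠ y → f {x, y} ∈ P) → S.card ≤ s := by
    intro s P hs S hS
    by_contra hcard
    push Not at hcard
    obtain ⟨S', hS', hc⟩ := Finset.exists_subset_card_eq (Nat.succ_le_of_lt hcard)
    apply hs
    simp only [bad, Finset.mem_biUnion]
    refine ⟨S', Finset.mem_powersetCard.2 ⟨Finset.subset_univ _, hc⟩, ?_⟩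
    simp only [Finset.mem_filter, Finset.mem_univ, true_and]
    intro e he
    rw [Finset.mem_powersetCard, Finset.card_eq_two] at he
    obtain ⟨hsub, x, y, hxy, rfl⟩ := he
    exact hS x (hS' (hsub (by simp))) y (hS' (hsub (by simp))) hxy
  refine ⟨fun x y => f {x, y} = z, ?_, ?_, ?_⟩
  · intro x y h
    rw [Finset.pair_comm]
    exact h
  · intro S hS
    exact hgen 9 _ hf1 S (fun x hx y hy hxy => by simpa using hS x hx y hy hxy)
  · intro S hS
    exact hgen (8 * q ^ 2) _ hf2 S (fun x hx y hy hxy => by simpa using hS x hx y hy hxy)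

theorem card_prod_le {V : Type*} [DecidableEq V] (S : Finset (V × V)) (A B : ℕ)
    (h1 : (S.image Prod.fst).card ≤ A)
    (h2 : ∀ a, ((S.filter (fun p => p.1 = a)).image Prod.snd).card ≤ B) : S.card ≤ B * A := by
  have := Finset.card_le_mul_card_image (f := Prod.fst) S B (fun a _ => by
    have h := h2 a
    rwa [Finset.card_image_of_injOn] at h
    intro p hp p' hp' hpp
    simp only [Finset.coe_filter, Set.mem_ofPred_eq] at hp hp'
    exact Prod.ext (hp.2.trans hp'.2.symm) hpp)
  exact this.trans (Nat.mul_le_mul_left _ h1)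

theorem upper (n q : ℕ) (hq : 2 ≤ q) (hn : n ≤ q ^ 8) :
    h2n n {Prrb, Prby} ≤ 64 * q ^ 4 := by
  classical
  obtain ⟨G, hsym, hcl, hind⟩ := ramsey_graph q hq
  have hsym' : ∀ x y, G x y ↔ G y x := fun x y => ⟨hsym x y, hsym y x⟩
  obtain ⟨φ⟩ : Nonempty (Fin n ↪ Fin (q ^ 4) × Fin (q ^ 4)) := by
    apply Function.Embedding.nonempty_of_card_le
    simp only [Fintype.card_prod, Fintype.card_fin]
    calc n ≤ q ^ 8 := hn
      _ = _ := by ring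
  let C : Fin (q ^ 4) × Fin (q ^ 4) → Fin (q ^ 4) × Fin (q ^ 4) → Col := fun p p' =>
    if p.1 = p'.1 then (if G p.2 p'.2 then Col.y else Col.r)
    else (if G p.1 p'.1 then Col.y else Col.b)
  have hC : ∀ p p', C p p' = C p' p := by
    intro p p'
    simp only [C, eq_comm (a := p.1), hsym' p.1, hsym' p.2]
  let c : Coloring n := ⟨fun i j => C (φ i) (φ j), fun i j => hC _ _⟩
  have hrb : RB c := by
    intro u v w _ _ _ hb hr
    simp only [c, C] at hb hr ⊢
    grind
  refine (Nat.sInf_le ⟨c, avoids_of_rb c hrb, rfl⟩ : h2n n {Prrb, Prby} ≤ h2 c).trans ?_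
  apply h2_le
  rintro S ⟨x, hx⟩
  rw [← Finset.card_map φ]
  have hx' : ∀ p ∈ S.map φ, ∀ p' ∈ S.map φ, p ≠ p' → C p p' ≠ x := by
    intro p hp p' hp' hne
    simp only [Finset.mem_map] at hp hp'
    obtain ⟨i, hi, rfl⟩ := hp
    obtain ⟨j, hj, rfl⟩ := hp'
    exact hx i hi j hj (fun h => hne (by rw [h]))
  generalize S.map φ = T at hx'
  have hV : ∀ U : Finset (Fin (q ^ 4)), U.card ≤ q ^ 4 := fun U => by
    simpa using Finset.card_le_univ U
  -- two vertices in different blocks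
  have hfst : ∀ P : Fin (q ^ 4) → Fin (q ^ 4) → Prop,
      (∀ p p' : Fin (q ^ 4) × Fin (q ^ 4), p.1 ≠ p'.1 → C p p' ≠ x → P p.1 p'.1) →
      ∀ a ∈ T.image Prod.fst, ∀ b ∈ T.image Prod.fst, a ≠ b → P a b := by
    intro P hP a ha b hb hab
    rw [Finset.mem_image] at ha hb
    obtain ⟨p, hp, rfl⟩ := ha
    obtain ⟨p', hp', rfl⟩ := hb
    exact hP p p' hab (hx' p hp p' hp' (fun h => hab (by rw [h])))
  have hsnd : ∀ P : Fin (q ^ 4) → Fin (q ^ 4) → Prop,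
      (∀ p p' : Fin (q ^ 4) × Fin (q ^ 4), p.1 = p'.1 → C p p' ≠ x → P p.2 p'.2) →
      ∀ i, ∀ a ∈ (T.filter (fun p => p.1 = i)).image Prod.snd,
        ∀ b ∈ (T.filter (fun p => p.1 = i)).image Prod.snd, a ≠ b → P a b := by
    intro P hP i a ha b hb hab
    rw [Finset.mem_image] at ha hb
    obtain ⟨p, hp, rfl⟩ := ha
    obtain ⟨p', hp', rfl⟩ := hb
    rw [Finset.mem_filter] at hp hp'
    exact hP p p' (hp.2.trans hp'.2.symm) (hx' p hp.1 p' hp'.1 (fun h => hab (by rw [h])))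
  rcases x with _ | _ | _
  · -- no red
    have := card_prod_le T (q ^ 4) 9 (hV _) (fun i => hcl _ (hsnd G (by
      intro p p' h1 h2
      by_contra h3
      exact h2 (by simp [C, h1, h3])) i))
    omega
  · have := card_prod_le T 9 (q ^ 4) (hcl _ (hfst G (by
      intro p p' h1 h2
      by_contra h3
      exact h2 (by simp [C, h1, h3])))) (fun i => hV _)
    omega
  · have := card_prod_le T (8 * q ^ 2) (8 * q ^ 2) (hind _ (hfst (fun a b => ¬ G a b) (by
      intro p p' h1 h2 h3
      exact h2 (by simp [C, h1, h3])))) (fun i => hind _ (hsnd (fun a b => ¬ G a b) (by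
      intro p p' h1 h2 h3
      exact h2 (by simp [C, h1, h3])) i))
    calc T.card ≤ _ := this
      _ = 64 * q ^ 4 := by ring

theorem stmt3 :
    (∀ n : ℕ, 0 < n → ⌈Real.sqrt n⌉₊ ≤ h2n n {Prrb, Prby}) ∧
    (∃ C : ℝ, 0 < C ∧ ∃ n0 : ℕ, ∀ n : ℕ, n0 ≤ n →
      (h2n n {Prrb, Prby} : ℝ) ≤ C * Real.sqrt n) := by
  constructor
  · intro n _
    unfold h2n
    apply le_csInf
    · refine ⟨_, ⟨fun _ _ => Col.y, fun _ _ => rfl⟩, avoids_of_rb _ ?_, rfl⟩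
      intro u v w _ _ _ h
      cases h
    · rintro m ⟨c, hc, rfl⟩
      rw [Nat.ceil_le, Real.sqrt_le_left (by positivity)]
      have := lower c (rb_of_avoids c hc)
      rw [sq]
      exact_mod_cast this
  · refine ⟨1024, by norm_num, 2, ?_⟩
    intro n hn
    have hex : ∃ q : ℕ, n ≤ q ^ 8 := ⟨n, Nat.le_self_pow (by norm_num) n⟩
    obtain ⟨q, hq1, hq2⟩ : ∃ q : ℕ, n ≤ q ^ 8 ∧ ∀ m < q, m ^ 8 < n :=
      ⟨Nat.find hex, Nat.find_spec hex, fun m hm => not_le.1 (Nat.find_min hex hm)⟩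
    have hq : 2 ≤ q := by
      by_contra hlt
      have : q = 0 ∨ q = 1 := by omega
      rcases this with rfl | rfl <;> norm_num at hq1 <;> omega
    have hu := upper n q hq hq1
    have hs : (q ^ 4) ^ 2 ≤ 256 * n := by
      calc (q ^ 4) ^ 2 = q ^ 8 := by ring
        _ ≤ (2 * (q - 1)) ^ 8 := by gcongr; omega
        _ = 256 * (q - 1) ^ 8 := by ring
        _ ≤ 256 * n := by
          have := hq2 (q - 1) (by omega)
          omega
    have hs' : (q : ℝ) ^ 4 ≤ 16 * Real.sqrt n := by
      apply abs_le_of_sq_le_sq' _ (by positivity) |>.2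
      rw [mul_pow, Real.sq_sqrt (by positivity)]
      have : (((q ^ 4) ^ 2 : ℕ) : ℝ) ≤ ((256 * n : ℕ) : ℝ) := by exact_mod_cast hs
      push_cast at this
      linarith
    have hu' : (h2n n {Prrb, Prby} : ℝ) ≤ 64 * (q : ℝ) ^ 4 := by exact_mod_cast hu
    linarith
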